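/- Let φ be an (m,a,M,A,r)-quasi-isometry from a graph H to a graph G. Write B_h := B_G(φ(h), r), and for each h ∈ V(H) set V_h := the union of B_{h'} over all h' ∈ B_H(h, mr + ⌈(m+a)/2⌉). Then (H,(V_h)_{h ∈ V(H)}) is a graph-decomposition of G of outer-radial width at most r + M(mr + ⌈(m+a)/2⌉) + A and radial spread at most 4mr + m + 2a + 1. -/

import Mathlib

open SimpleGraph

namespace RadialPaper

variable {V W N : Type*}

/-- The ball of radius `r` around a set `U` of vertices of `G`. -/
def ballSet (G : SimpleGraph V) (U : Set V) (r : ℕ) : Set V :=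
  {v | ∃ u ∈ U, G.edist u v ≤ (r : ℕ∞)}

/-- `G` has radius at most `r`: some vertex has distance at most `r` from every vertex.
The empty graph has radius `0`; a nonempty disconnected graph has radius `∞`, hence
satisfies `radiusLE` for no `r`. -/
def radiusLE (G : SimpleGraph V) (r : ℕ) : Prop :=
  Nonempty V → ∃ v : V, ∀ w : V, G.edist v w ≤ (r : ℕ∞)

/-- `(Hg, B)` is a graph-decomposition of `G` modelled on `Hg`. -/
def IsGraphDecomp (G : SimpleGraph V) (Hg : SimpleGraph N) (B : N → Set V) : Prop :=
  (∀ v : V, ∃ h : N, v ∈ B h) ∧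
  (∀ ⦃u v : V⦄, G.Adj u v → ∃ h : N, u ∈ B h ∧ v ∈ B h) ∧
  (∀ v : V, (Hg.induce {h : N | v ∈ B h}).Connected)

/-- A subgraph `X` of `G` is `c`-quasi-geodesic. -/
def IsQuasiGeodesic (G : SimpleGraph V) (X : G.Subgraph) (c : ℕ) : Prop :=
  ∀ u v : X.verts, X.coe.edist u v ≤ (c : ℕ∞) * G.edist (u : V) (v : V)

/-- The subgraph `Y` of `G` is a `(≥ k)`-subdivision of the graph `X`. -/
def IsSubdivGE (k : ℕ) (X : SimpleGraph W) {G : SimpleGraph V} (Y : G.Subgraph) : Prop :=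
  ∃ (f : W → V) (p : ∀ ⦃u v : W⦄, X.Adj u v → G.Walk (f u) (f v)),
    Function.Injective f ∧
    (∀ ⦃u v : W⦄ (h : X.Adj u v), (p h).IsPath) ∧
    (∀ ⦃u v : W⦄ (h : X.Adj u v), k + 1 ≤ (p h).length) ∧
    (∀ ⦃u v : W⦄ (h : X.Adj u v), p h.symm = (p h).reverse) ∧
    (∀ ⦃u v : W⦄ (h : X.Adj u v) (w : W), f w ∈ (p h).support → w = u ∨ w = v) ∧
    (∀ ⦃u v u' v' : W⦄ (h : X.Adj u v) (h' : X.Adj u' v'), s(u, v) ≠ s(u', v') →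
      ∀ x : V, x ∈ (p h).support → x ∈ (p h').support →
        (x = f u ∨ x = f v) ∧ (x = f u' ∨ x = f v')) ∧
    Y.verts = Set.range f ∪ {x : V | ∃ (u v : W) (h : X.Adj u v), x ∈ (p h).support} ∧
    Y.edgeSet = {e : Sym2 V | ∃ (u v : W) (h : X.Adj u v), e ∈ (p h).edges}

/-- `G` contains a `(≥ k)`-subdivision of `X` as a `c`-quasi-geodesic subgraph. -/
def ContainsQuasiGeodesicSubdivGE (G : SimpleGraph V) (k : ℕ) (X : SimpleGraph W) (c : ℕ) :
    Prop :=
  ∃ Y : G.Subgraph, IsSubdivGE k X Y ∧ IsQuasiGeodesic G Y c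

/-- `X` is a minor of `Hg`. -/
def IsMinorOf (X : SimpleGraph W) (Hg : SimpleGraph N) : Prop :=
  ∃ B : W → Set N, (∀ w, (B w).Nonempty) ∧ (∀ w, (Hg.induce (B w)).Connected) ∧
    (∀ ⦃w w' : W⦄, w ≠ w' → Disjoint (B w) (B w')) ∧
    (∀ ⦃w w' : W⦄, X.Adj w w' → ∃ a ∈ B w, ∃ b ∈ B w', Hg.Adj a b)

/-- A class of (finite) graphs, given on the canonical vertex sets `Fin n`, is minor-closed. -/
def MinorClosed (ℋ : ∀ n : ℕ, SimpleGraph (Fin n) → Prop) : Prop :=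
  ∀ ⦃m n : ℕ⦄ (X : SimpleGraph (Fin m)) (Hg : SimpleGraph (Fin n)),
    ℋ n Hg → IsMinorOf X Hg → ℋ m X

/-- The triangle `K³`. -/
def triangleGraph : SimpleGraph (Fin 3) := ⊤

/-- The claw `K_{1,3}`, with centre `0`. -/
def clawGraph : SimpleGraph (Fin 4) := SimpleGraph.fromRel (fun a _ => a = 0)

/-- The wrench graph: two adjacent vertices `0, 1` of degree three, with leaves `2,3` and
`4,5` respectively. -/
def wrenchGraph : SimpleGraph (Fin 6) :=
  SimpleGraph.fromRel (fun a b =>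
    (a = 0 ∧ b = 1) ∨ (a = 0 ∧ b = 2) ∨ (a = 0 ∧ b = 3) ∨ (a = 1 ∧ b = 4) ∨ (a = 1 ∧ b = 5))

/-- The star `K_{1,m}`, with centre `none`. -/
def starGraph (m : ℕ) : SimpleGraph (Option (Fin m)) :=
  SimpleGraph.fromRel (fun a _ => a = none)

/-- `Hg` is a disjoint union of paths: every connected component is a path. -/
def IsUnionOfPaths (Hg : SimpleGraph N) : Prop :=
  ∀ cc : Hg.ConnectedComponent, ∃ m : ℕ,
    Nonempty (Hg.induce cc.supp ≃g SimpleGraph.pathGraph m)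

/-- `Hg` is a disjoint union of cycles: every connected component is a cycle. -/
def IsUnionOfCycles (Hg : SimpleGraph N) : Prop :=
  ∀ cc : Hg.ConnectedComponent, ∃ m : ℕ, 3 ≤ m ∧
    Nonempty (Hg.induce cc.supp ≃g SimpleGraph.cycleGraph m)

/-- `Hg` is a subdivided star, i.e. a `(≥ 0)`-subdivision of some star `K_{1,m}`. -/
def IsSubdividedStar (Hg : SimpleGraph N) : Prop :=
  ∃ m : ℕ, IsSubdivGE 0 (starGraph m) (⊤ : Hg.Subgraph)

/-- `Hg` is a disjoint union of subdivided stars. -/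
def IsUnionOfSubdividedStars (Hg : SimpleGraph N) : Prop :=
  ∀ cc : Hg.ConnectedComponent, IsSubdividedStar (Hg.induce cc.supp)

/-- A graph-decomposition is honest: bags of adjacent nodes intersect. -/
def Honest (Hg : SimpleGraph N) (B : N → Set V) : Prop :=
  ∀ ⦃h h' : N⦄, Hg.Adj h h' → (B h ∩ B h').Nonempty

/-- The outer-radial width of a decomposition of `G` is at most `r`. -/
def OuterRadialWidthLE (G : SimpleGraph V) (B : N → Set V) (r : ℕ) : Prop :=
  ∀ h : N, ∃ z : V, ∀ v ∈ B h, G.edist z v ≤ (r : ℕ∞)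

/-- The radial spread of a decomposition `(Hg, B)` of a graph with vertex set `V`
is at most `r`. -/
def RadialSpreadLE (Hg : SimpleGraph N) (B : N → Set V) (r : ℕ) : Prop :=
  ∀ v : V, radiusLE (Hg.induce {h : N | v ∈ B h}) r

/-- `φ` is an `(m, a, M, A, r)`-quasi-isometry from `Hg` to `G`. -/
def IsQuasiIsometry (Hg : SimpleGraph N) (G : SimpleGraph V) (m a M A r : ℕ)
    (φ : N → V) : Prop :=
  (∀ h h' : N, Hg.edist h h' ≤ (m : ℕ∞) * G.edist (φ h) (φ h') + (a : ℕ∞)) ∧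
  (∀ h h' : N, G.edist (φ h) (φ h') ≤ (M : ℕ∞) * Hg.edist h h' + (A : ℕ∞)) ∧
  (∀ v : V, ∃ h : N, G.edist v (φ h) ≤ (r : ℕ∞))

/-- `C` is a connected component of `G - S`: a maximal connected set of vertices
disjoint from `S`. -/
def IsCompOf (G : SimpleGraph V) (C S : Set V) : Prop :=
  C.Nonempty ∧ Disjoint C S ∧ (G.induce C).Connected ∧
  ∀ D : Set V, C ⊆ D → Disjoint D S → (G.induce D).Connected → D = C

/-- The subgraph `P` of `G` is an `M₀`–`M₁` path meeting `C`. -/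
def IsM01Path (G : SimpleGraph V) (M₀ M₁ C : Set V) (P : G.Subgraph) : Prop :=
  ∃ (x y : V) (q : G.Walk x y), q.IsPath ∧ q.toSubgraph = P ∧ x ∈ M₀ ∧ y ∈ M₁ ∧
    (∀ z ∈ q.support, z ≠ x → z ≠ y → z ∉ M₀ ∪ M₁) ∧ ∃ z ∈ q.support, z ∈ C

/-- The number of `M₀`–`M₁` paths meeting `C` that are contained in the subgraph `OS`. -/
noncomputable def Wcount (G : SimpleGraph V) (M₀ M₁ C : Set V) (OS : G.Subgraph) : ℕ :=
  Set.ncard {P : G.Subgraph | P ≤ OS ∧ IsM01Path G M₀ M₁ C P}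

/-!
Fix a vertex `v` of `G`. The nodes whose bag contains `v` form the ball of radius `R` in `H` around
`U = {h | d(φ h, v) ≤ r}`. By (Q1), any two nodes of `U` have distance at most `2mr + a` in `H`, and
since `2mr + a ≤ 2R`, every node of a shortest path between them is within `R` of one of its ends.
So these paths stay in the ball, which bounds its radius by `2mr + a + R` and makes it connected.
An edge `uv` of `G` lies in a common bag because the nodes `h, h'` with `φ h`, `φ h'` close to
`u`, `v` have distance at most `m(2r + 1) + a ≤ 2R`, so that some node is within `R` of both.
-/

section Distance

variable {G : SimpleGraph V} {u v x : V}

theorem exists_walk_length_le_of_edist_le {k : ℕ} (h : G.edist u v ≤ k) :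
    ∃ p : G.Walk u v, p.length ≤ k := by
  obtain ⟨p, hp⟩ := exists_walk_of_edist_ne_top (ne_top_of_le_ne_top (ENat.natCast_ne_top k) h)
  exact ⟨p, by rwa [← hp, Nat.cast_le] at h⟩

theorem edist_add_edist_le_length (p : G.Walk u v) (hx : x ∈ p.support) :
    G.edist u x + G.edist x v ≤ p.length := by
  classical
  calc
    G.edist u x + G.edist x v ≤ (p.takeUntil x hx).length + (p.dropUntil x hx).length :=
      add_le_add (Walk.edist_le _) (Walk.edist_le _)
    _ = p.length := by rw [← Nat.cast_add, ← Walk.length_append, Walk.take_spec]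

theorem exists_edist_le_edist_le_of_edist_le_add {i j : ℕ} (h : G.edist u v ≤ (i + j : ℕ)) :
    ∃ x, G.edist u x ≤ i ∧ G.edist x v ≤ j := by
  obtain ⟨p, hp⟩ := exists_walk_length_le_of_edist_le h
  have htake : (p.take i).length ≤ i := by rw [Walk.take_length]; exact min_le_left _ _
  have hdrop : (p.drop i).length ≤ j := by rw [Walk.drop_length]; omega
  exact ⟨p.getVert i, (Walk.edist_le _).trans (Nat.cast_le.2 htake),
    (Walk.edist_le _).trans (Nat.cast_le.2 hdrop)⟩

theorem edist_induce_le_length {S : Set V} (p : G.Walk u v) (hp : ∀ x ∈ p.support, x ∈ S) :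
    (G.induce S).edist ⟨u, hp u p.start_mem_support⟩ ⟨v, hp v p.end_mem_support⟩ ≤ p.length := by
  have hlength : (p.induce S hp).length = p.length := by
    rw [← Walk.length_map (Embedding.induce S).toHom, Walk.map_induce]
    rfl
  exact hlength ▸ Walk.edist_le (p.induce S hp)

end Distance

section Ball

variable {G : SimpleGraph V} {U : Set V} {L R : ℕ}

theorem radiusLE.mono {r s : ℕ} (h : radiusLE G r) (hrs : r ≤ s) : radiusLE G s := fun hV =>
  (h hV).imp fun _ hv w => (hv w).trans (Nat.cast_le.2 hrs)

theorem radiusLE.connected [Nonempty V] {r : ℕ} (h : radiusLE G r) : G.Connected := by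
  obtain ⟨v, hv⟩ := h ‹_›
  refine connected_of_ediam_ne_top (ne_top_of_le_ne_top (ENat.natCast_ne_top (2 * r)) ?_)
  calc
    G.ediam ≤ 2 * G.eccent v := ediam_le_two_mul_eccent v
    _ ≤ 2 * r := by gcongr; exact (eccent_le_iff v r).2 hv
    _ = (2 * r : ℕ) := by push_cast; rfl

theorem subset_ballSet : U ⊆ ballSet G U R := fun u hu => ⟨u, hu, by simp⟩

theorem edist_induce_ballSet_le_of_mem {u v : V} (hu : u ∈ U) (hv : v ∈ U)
    (h : G.edist u v ≤ L) (hL : L ≤ 2 * R) :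
    (G.induce (ballSet G U R)).edist ⟨u, subset_ballSet hu⟩ ⟨v, subset_ballSet hv⟩ ≤ L := by
  obtain ⟨p, hp⟩ := exists_walk_length_le_of_edist_le h
  have hsupport : ∀ x ∈ p.support, x ∈ ballSet G U R := fun x hx => by
    have hsum : G.edist u x + G.edist x v ≤ R + R :=
      (edist_add_edist_le_length p hx).trans (by exact_mod_cast (by omega : p.length ≤ R + R))
    have hnear : G.edist u x ≤ R ∨ G.edist x v ≤ R := by
      by_contra! hfar
      exact (ENat.add_lt_add hfar.1 hfar.2).not_ge hsum
    rcases hnear with hux | hxv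
    · exact ⟨u, hu, hux⟩
    · exact ⟨v, hv, edist_comm.trans_le hxv⟩
  exact (edist_induce_le_length p hsupport).trans (Nat.cast_le.2 hp)

theorem edist_induce_ballSet_le {u v : V} (hu : u ∈ U) (h : G.edist u v ≤ R) :
    (G.induce (ballSet G U R)).edist ⟨u, subset_ballSet hu⟩ ⟨v, u, hu, h⟩ ≤ R := by
  obtain ⟨p, hp⟩ := exists_walk_length_le_of_edist_le h
  have hsupport : ∀ x ∈ p.support, x ∈ ballSet G U R := fun x hx =>
    ⟨u, hu, le_self_add.trans ((edist_add_edist_le_length p hx).trans (Nat.cast_le.2 hp))⟩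
  exact (edist_induce_le_length p hsupport).trans (Nat.cast_le.2 hp)

theorem radiusLE_induce_ballSet (hU : ∀ u ∈ U, ∀ v ∈ U, G.edist u v ≤ L) (hL : L ≤ 2 * R) :
    radiusLE (G.induce (ballSet G U R)) (L + R) := by
  rintro ⟨-, u, hu, -⟩
  refine ⟨⟨u, subset_ballSet hu⟩, ?_⟩
  rintro ⟨w, v, hv, hvw⟩
  calc
    _ ≤ (G.induce (ballSet G U R)).edist ⟨u, subset_ballSet hu⟩ ⟨v, subset_ballSet hv⟩ +
        (G.induce (ballSet G U R)).edist ⟨v, subset_ballSet hv⟩ ⟨w, v, hv, hvw⟩ :=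
      SimpleGraph.edist_triangle
    _ ≤ (L : ℕ∞) + R :=
      add_le_add (edist_induce_ballSet_le_of_mem hu hv (hU u hu v hv) hL)
        (edist_induce_ballSet_le hv hvw)
    _ = (L + R : ℕ) := (Nat.cast_add L R).symm

end Ball

theorem RadialSpreadLE.mono {Hg : SimpleGraph N} {B : N → Set V} {k l : ℕ}
    (h : RadialSpreadLE Hg B k) (hkl : k ≤ l) : RadialSpreadLE Hg B l := fun v => (h v).mono hkl

/-- The bag `V_h` of the decomposition induced by a map `φ` from the nodes of `Hg` to the vertices
of `G`: the union of the balls of radius `r` around `φ h'`, over all `h'` in the ball of radius `R`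
around `h`. The paper takes `R = m * r + ⌈(m + a) / 2⌉`. -/
def quasiIsometryBag (Hg : SimpleGraph N) (G : SimpleGraph V) (φ : N → V) (r R : ℕ) (h : N) :
    Set V :=
  {x | ∃ h' : N, Hg.edist h h' ≤ (R : ℕ∞) ∧ G.edist (φ h') x ≤ (r : ℕ∞)}

section QuasiIsometry

variable {G : SimpleGraph V} {Hg : SimpleGraph N} {m a M A r R : ℕ} {φ : N → V}

theorem setOf_mem_quasiIsometryBag (v : V) :
    {h | v ∈ quasiIsometryBag Hg G φ r R h} = ballSet Hg {h | G.edist (φ h) v ≤ r} R := by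
  ext h
  simp only [quasiIsometryBag, ballSet, Set.mem_ofPred_eq, edist_comm (u := h), and_comm]

namespace IsQuasiIsometry

theorem edist_le (hφ : IsQuasiIsometry Hg G m a M A r φ) {h h' : N} {k : ℕ}
    (hk : G.edist (φ h) (φ h') ≤ k) : Hg.edist h h' ≤ (m * k + a : ℕ) :=
  calc
    Hg.edist h h' ≤ m * G.edist (φ h) (φ h') + a := hφ.1 h h'
    _ ≤ m * k + a := by gcongr
    _ = (m * k + a : ℕ) := by push_cast; rfl

theorem exists_edist_le (hφ : IsQuasiIsometry Hg G m a M A r φ) (v : V) :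
    ∃ h, G.edist (φ h) v ≤ r :=
  (hφ.2.2 v).imp fun _ => edist_comm.trans_le

theorem edist_le_of_edist_le (hφ : IsQuasiIsometry Hg G m a M A r φ) {h h' : N} {u v : V} {k : ℕ}
    (hu : G.edist (φ h) u ≤ r) (huv : G.edist u v ≤ k) (hv : G.edist (φ h') v ≤ r) :
    Hg.edist h h' ≤ (m * (2 * r + k) + a : ℕ) := by
  refine hφ.edist_le ?_
  calc
    G.edist (φ h) (φ h') ≤ G.edist (φ h) u + (G.edist u v + G.edist v (φ h')) :=
      SimpleGraph.edist_triangle.trans (add_le_add_right SimpleGraph.edist_triangle _)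
    _ ≤ r + (k + r) := add_le_add hu (add_le_add huv (edist_comm.trans_le hv))
    _ = (2 * r + k : ℕ) := by push_cast; ring

theorem exists_mem_quasiIsometryBag_of_adj (hφ : IsQuasiIsometry Hg G m a M A r φ)
    (hR : m * (2 * r + 1) + a ≤ 2 * R) {u v : V} (huv : G.Adj u v) :
    ∃ h, u ∈ quasiIsometryBag Hg G φ r R h ∧ v ∈ quasiIsometryBag Hg G φ r R h := by
  obtain ⟨hu, hhu⟩ := hφ.exists_edist_le u
  obtain ⟨hv, hhv⟩ := hφ.exists_edist_le v
  have hdist : Hg.edist hu hv ≤ (R + R : ℕ) :=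
    (hφ.edist_le_of_edist_le hhu (k := 1) (edist_eq_one_iff_adj.2 huv).le hhv).trans
      (Nat.cast_le.2 (by omega))
  obtain ⟨h, hhu', hhv'⟩ := exists_edist_le_edist_le_of_edist_le_add hdist
  exact ⟨h, ⟨hu, edist_comm.trans_le hhu', hhu⟩, ⟨hv, hhv', hhv⟩⟩

theorem radialSpreadLE (hφ : IsQuasiIsometry Hg G m a M A r φ) (hR : m * (2 * r) + a ≤ 2 * R) :
    RadialSpreadLE Hg (quasiIsometryBag Hg G φ r R) (m * (2 * r) + a + R) := fun v => by
  rw [setOf_mem_quasiIsometryBag]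
  exact radiusLE_induce_ballSet
    (fun h hh h' hh' => hφ.edist_le_of_edist_le (k := 0) hh (by simp) hh') hR

theorem outerRadialWidthLE (hφ : IsQuasiIsometry Hg G m a M A r φ) (s R : ℕ) :
    OuterRadialWidthLE G (quasiIsometryBag Hg G φ s R) (s + M * R + A) := by
  refine fun h => ⟨φ h, ?_⟩
  rintro x ⟨h', hh', hx⟩
  calc
    G.edist (φ h) x ≤ G.edist (φ h) (φ h') + G.edist (φ h') x := SimpleGraph.edist_triangle
    _ ≤ (M * Hg.edist h h' + A) + s := add_le_add (hφ.2.1 h h') hx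
    _ ≤ (M * R + A) + s := by gcongr
    _ = (s + M * R + A : ℕ) := by push_cast; ring

theorem isGraphDecomp (hφ : IsQuasiIsometry Hg G m a M A r φ)
    (hR : m * (2 * r + 1) + a ≤ 2 * R) : IsGraphDecomp G Hg (quasiIsometryBag Hg G φ r R) := by
  have hcover (v : V) : ∃ h, v ∈ quasiIsometryBag Hg G φ r R h :=
    (hφ.exists_edist_le v).imp fun h hh => ⟨h, by simp, hh⟩
  have hR' : m * (2 * r) + a ≤ 2 * R := by rw [mul_add] at hR; omega
  refine ⟨hcover, fun _ _ => hφ.exists_mem_quasiIsometryBag_of_adj hR, fun v => ?_⟩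
  have : Nonempty {h | v ∈ quasiIsometryBag Hg G φ r R h} :=
    nonempty_subtype.2 (hcover v)
  exact (hφ.radialSpreadLE hR' v).connected

end IsQuasiIsometry

theorem decomposition_of_quasi_isometry_general (hφ : IsQuasiIsometry Hg G m a M A r φ)
    (hR : m * (2 * r + 1) + a ≤ 2 * R) :
    IsGraphDecomp G Hg (quasiIsometryBag Hg G φ r R) ∧
      OuterRadialWidthLE G (quasiIsometryBag Hg G φ r R) (r + M * R + A) ∧
      RadialSpreadLE Hg (quasiIsometryBag Hg G φ r R) (m * (2 * r) + a + R) :=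
  ⟨hφ.isGraphDecomp hR, hφ.outerRadialWidthLE r R,
    hφ.radialSpreadLE (by rw [mul_add] at hR; omega)⟩

end QuasiIsometry

/-- Let `φ` be an `(m, a, M, A, r)`-quasi-isometry from `Hg` to `G`.
With `V_h` the union of the balls `B_G(φ h', r)` over all `h'` in the ball
`B_{Hg}(h, m·r + ⌈(m+a)/2⌉)`, the family `(V_h)` is a graph-decomposition of `G` of
outer-radial width at most `r + M·(m·r + ⌈(m+a)/2⌉) + A` and radial spread at most
`4·m·r + m + 2·a + 1`. -/
theorem decomposition_of_quasi_isometry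
    {V N : Type*} [Fintype V] [Fintype N] (G : SimpleGraph V) (Hg : SimpleGraph N)
    (m a M A r : ℕ) (hm : 1 ≤ m) (hM : 1 ≤ M) (φ : N → V)
    (hqi : IsQuasiIsometry Hg G m a M A r φ)
    (B : N → Set V)
    (hB : B = fun h => {x : V | ∃ h' : N,
      Hg.edist h h' ≤ ((m * r + (m + a + 1) / 2 : ℕ) : ℕ∞) ∧
      G.edist (φ h') x ≤ (r : ℕ∞)}) :
    IsGraphDecomp G Hg B ∧
      OuterRadialWidthLE G B (r + M * (m * r + (m + a + 1) / 2) + A) ∧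
      RadialSpreadLE Hg B (4 * m * r + m + 2 * a + 1) := by
  subst hB
  obtain ⟨hdecomp, hwidth, hspread⟩ := decomposition_of_quasi_isometry_general hqi
    (R := m * r + (m + a + 1) / 2) (by ring_nf; omega)
  exact ⟨hdecomp, hwidth, hspread.mono (by ring_nf; omega)⟩

end RadialPaper
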